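/- (DPRM Theorem) Every recursively enumerable set of n-tuples of natural numbers is Diophantine: if S ⊆ (Fin n → ℕ) is such that membership in S is semidecidable (S is the domain of a partial recursive function under a standard encoding of tuples), then there exist m and integer polynomials in n parameters and m unknowns whose solvability in natural numbers characterizes membership in S (i.e., S is a Diophantine set in the sense of Mathlib's Dioph). -/

import Mathlib

/-!
The graph of every partial recursive function is Diophantine, by induction on its construction: a
primitive recursion is described by a code, via Gödel's beta function, of the sequence of its
intermediate values, and a minimisation by the values at all smaller arguments. Both descriptions
contain a bounded universal quantifier, so everything rests on its elimination from
`∀ k < y, ∃ t, p(k, v, t) = q(k, v, t)`.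

Bound all the witnesses by `u` and choose `Q` larger than `y`, `u` and the values of `p` and `q`
involved. The numbers `m_k = Q!² / (k + 1) - 1` with `k < y` have only prime factors above `Q`, are
pairwise coprime, and `Q!² - 1 ≡ k` modulo `m_k`. By the Chinese remainder theorem the witnesses for
all `k` are therefore the residues of one tuple `a`, and the `y` equations become a single
congruence at `(Q!² - 1, v, a)` modulo the product of the `m_k`, which is the binomial coefficient
of `Q!² - 1` over `y`. The bound on the residues is expressed by `m_k ∣ a.choose (u + 1)`. Binomial
coefficients and factorials are Diophantine because exponentiation is.
-/

open Dioph MvPolynomial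
open scoped Nat

local notation:67 x:68 " ::ₒ " v:67 => Option.elim' x v

local notation:65 v:66 " ⊗ " t:65 => Sum.elim v t

universe u

theorem sum_range_mul_pow_div_pow_mod {b : ℕ} {c : ℕ → ℕ} (hc : ∀ i, c i < b) {n k : ℕ}
    (hk : k < n) : (∑ i ∈ Finset.range n, c i * b ^ i) / b ^ k % b = c k := by
  have hsum (c : ℕ → ℕ) (n : ℕ) : ∑ i ∈ Finset.range (n + 1), c i * b ^ i =
      b * ∑ i ∈ Finset.range n, c (i + 1) * b ^ i + c 0 := by
    rw [Finset.sum_range_succ', Finset.mul_sum, pow_zero, mul_one]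
    simp only [pow_succ', mul_left_comm]
  induction k generalizing c n with
  | zero =>
    obtain ⟨n, rfl⟩ := Nat.exists_eq_add_one_of_ne_zero hk.ne'
    rw [hsum, pow_zero, Nat.div_one, Nat.mul_add_mod, Nat.mod_eq_of_lt (hc 0)]
  | succ k ih =>
    obtain ⟨n, rfl⟩ := Nat.exists_eq_add_one_of_ne_zero (Nat.ne_zero_of_lt hk)
    rw [pow_succ', ← Nat.div_div_eq_div_mul, hsum, Nat.mul_add_div (Nat.zero_lt_of_lt (hc 0)),
      Nat.div_eq_of_lt (hc 0), add_zero, ih (fun i => hc (i + 1)) (Nat.lt_of_succ_lt_succ hk)]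

/-- The binomial coefficients are the digits of `(b + 1) ^ n` in base `b = 2 ^ n + 1`. -/
theorem choose_eq_div_mod (n k : ℕ) :
    n.choose k = (2 ^ n + 1 + 1) ^ n / (2 ^ n + 1) ^ k % (2 ^ n + 1) := by
  have hexpand : (2 ^ n + 1 + 1) ^ n =
      ∑ i ∈ Finset.range (n + 1 + k), n.choose i * (2 ^ n + 1) ^ i := by
    rw [Finset.eventually_constant_sum (N := n + 1) (fun i hi => by
      rw [Nat.choose_eq_zero_of_lt hi, zero_mul]) (by omega), add_pow]
    simp [mul_comm]
  rw [hexpand, sum_range_mul_pow_div_pow_mod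
    (fun i => Nat.lt_succ_of_le (Nat.choose_le_two_pow n i)) (by omega)]

theorem pow_succ_le_mul_descFactorial_add (n r : ℕ) :
    r ^ (n + 1) ≤ r * r.descFactorial n + n ^ 2 * r ^ n := by
  induction n with
  | zero => simp
  | succ n ih =>
    have hstep : r * r.descFactorial n ≤ r.descFactorial (n + 1) + n * r ^ n := by
      rw [Nat.descFactorial_succ]
      calc r * r.descFactorial n ≤ (r - n + n) * r.descFactorial n := by gcongr; omega
        _ ≤ (r - n) * r.descFactorial n + n * r ^ n := by
          rw [add_mul]
          gcongr
          exact Nat.descFactorial_le_pow r n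
    calc r ^ (n + 1 + 1) = r * r ^ (n + 1) := pow_succ' r (n + 1)
      _ ≤ r * (r.descFactorial (n + 1) + n * r ^ n + n ^ 2 * r ^ n) := by gcongr; omega
      _ = r * r.descFactorial (n + 1) + (n ^ 2 + n) * r ^ (n + 1) := by ring
      _ ≤ r * r.descFactorial (n + 1) + (n + 1) ^ 2 * r ^ (n + 1) := by gcongr; nlinarith

theorem pow_div_choose_eq_factorial {n r : ℕ} (hr : (n ! + 1) * n ^ 2 < r) :
    r ^ n / r.choose n = n ! := by
  have hdesc := Nat.descFactorial_eq_factorial_mul_choose r n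
  refine Nat.div_eq_of_lt_le (hdesc ▸ Nat.descFactorial_le_pow r n) ?_
  have hpow : 0 < r ^ n := pow_pos (Nat.zero_lt_of_lt hr) n
  have hlow := Nat.mul_le_mul_left (n ! + 1) (pow_succ_le_mul_descFactorial_add n r)
  refine Nat.lt_of_mul_lt_mul_left (a := n ! * r) ?_
  calc n ! * r * r ^ n < (n ! + 1) * (r * r.descFactorial n) := by
        rw [pow_succ] at hlow
        nlinarith [Nat.mul_lt_mul_of_pos_right hr hpow]
    _ = n ! * r * ((n ! + 1) * r.choose n) := by rw [hdesc]; ring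

section

variable {α : Type} {f g : (α → ℕ) → ℕ}

theorem choose_dioph (df : DiophFn f) (dg : DiophFn g) : DiophFn fun v => (f v).choose (g v) := by
  have db : DiophFn fun v => 2 ^ f v + 1 := pow_dioph (D.2) df D+ D.1
  simp_rw [choose_eq_div_mod]
  exact pow_dioph (db D+ D.1) df D/ pow_dioph db dg D% db

theorem factorial_dioph (df : DiophFn f) : DiophFn fun v => (f v)! := by
  have heq (n : ℕ) : ((n ^ n + 1) * n ^ 2 + 1) ^ n / ((n ^ n + 1) * n ^ 2 + 1).choose n = n ! := by
    refine pow_div_choose_eq_factorial (Nat.lt_succ_of_le ?_)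
    gcongr
    exact Nat.factorial_le_pow n
  have dr : DiophFn fun v => (f v ^ f v + 1) * f v ^ 2 + 1 :=
    (pow_dioph df df D+ D.1) D* pow_dioph df (D.2) D+ D.1
  simp_rw [← heq]
  exact pow_dioph dr df D/ choose_dioph dr df

end

/-! ### Polynomials with natural number coefficients -/

theorem exists_mvPolynomial_eval_sub {α : Type*} (p : Poly α) :
    ∃ q r : MvPolynomial α ℕ, ∀ x, p x = (eval x q : ℤ) - eval x r := by
  induction p using Poly.induction with
  | H1 i => exact ⟨X i, 0, fun x => by simp⟩
  | H2 n => exact ⟨C n.toNat, C (-n).toNat, fun x => by simp⟩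
  | H3 f g hf hg =>
    obtain ⟨q, r, hf⟩ := hf
    obtain ⟨q', r', hg⟩ := hg
    exact ⟨q + r', r + q', fun x => by simp only [Poly.sub_apply, hf, hg, map_add]; push_cast; ring⟩
  | H4 f g hf hg =>
    obtain ⟨q, r, hf⟩ := hf
    obtain ⟨q', r', hg⟩ := hg
    exact ⟨q * q' + r * r', q * r' + r * q', fun x => by
      simp only [Poly.mul_apply, hf, hg, map_add, map_mul]; push_cast; ring⟩

theorem exists_finite_mvPolynomial_of_dioph {α : Type u} {S : Set (α → ℕ)} (hS : Dioph S) :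
    ∃ (β : Type u) (_ : Finite β) (p q : MvPolynomial (α ⊕ β) ℕ),
      ∀ v, v ∈ S ↔ ∃ t, eval (v ⊗ t) p = eval (v ⊗ t) q := by
  classical
  obtain ⟨β, P, hP⟩ := hS
  obtain ⟨p, q, hpq⟩ := exists_mvPolynomial_eval_sub P
  let s : Finset β := (p.vars ∪ q.vars).toRight
  let incl : α ⊕ s → α ⊕ β := Sum.map id Subtype.val
  have hincl : Function.Injective incl := Function.injective_id.sumMap Subtype.val_injective
  have hrange {i : α ⊕ β} (hi : i ∈ p.vars ∪ q.vars) : i ∈ Set.range incl := by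
    rcases i with a | b
    · exact ⟨Sum.inl a, rfl⟩
    · exact ⟨Sum.inr ⟨b, Finset.mem_toRight.2 hi⟩, rfl⟩
  obtain ⟨p', hp'⟩ := exists_rename_eq_of_vars_subset_range p incl hincl
    fun i hi => hrange (Finset.mem_union_left _ hi)
  obtain ⟨q', hq'⟩ := exists_rename_eq_of_vars_subset_range q incl hincl
    fun i hi => hrange (Finset.mem_union_right _ hi)
  refine ⟨s, inferInstance, p', q', fun v => (hP v).trans ?_⟩
  simp only [hpq, sub_eq_zero, Nat.cast_inj, ← hp', ← hq', eval_rename, incl, Sum.elim_comp_map,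
    Function.comp_id]
  exact (Subtype.val_injective.surjective_comp_right.exists (p := fun t : s → ℕ =>
    eval (v ⊗ t) p' = eval (v ⊗ t) q')).symm

theorem eval_modEq {σ : Type*} {m : ℕ} {x y : σ → ℕ} (h : ∀ i, x i ≡ y i [MOD m])
    (p : MvPolynomial σ ℕ) : eval x p ≡ eval y p [MOD m] := by
  induction p using MvPolynomial.induction_on with
  | C n => simp [Nat.ModEq.refl]
  | add p q hp hq => simpa using hp.add hq
  | mul_X p i hp => simpa using hp.mul (h i)

theorem eval_monotone {σ : Type*} (p : MvPolynomial σ ℕ) : Monotone fun x => eval x p := by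
  intro x y hxy
  induction p using MvPolynomial.induction_on with
  | C n => simp
  | add p q hp hq => simpa using add_le_add hp hq
  | mul_X p i hp => simpa using Nat.mul_le_mul hp (hxy i)

theorem eval_dioph {α : Type} {σ : Type*} {g : (α → ℕ) → σ → ℕ} (dg : ∀ i, DiophFn fun v => g v i)
    (p : MvPolynomial σ ℕ) : DiophFn fun v => eval (g v) p := by
  induction p using MvPolynomial.induction_on with
  | C n =>
    simp only [eval_C]
    exact const_dioph n
  | add p q hp hq => simpa using hp D+ hq
  | mul_X p i hp => simpa using hp D* dg i

/-! ### Pairwise coprime moduli -/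

/-- The moduli `m_k = Q!² / (k + 1) - 1`, `k < Q`, to which the Chinese remainder theorem is
applied. They are pairwise coprime, `m_k` divides `Q!² - 1 - k`, and their product is a binomial
coefficient. -/
def crtModulus (Q k : ℕ) : ℕ :=
  Q ! ^ 2 / (k + 1) - 1

section crtModulus

variable {Q k : ℕ}

theorem crtModulus_add_one_mul (hk : k < Q) : (crtModulus Q k + 1) * (k + 1) = Q ! ^ 2 := by
  have hdvd : k + 1 ∣ Q ! ^ 2 :=
    (Nat.dvd_factorial k.succ_pos hk).trans (dvd_pow_self _ two_ne_zero)
  have hpos : 0 < Q ! ^ 2 / (k + 1) :=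
    Nat.div_pos (Nat.le_of_dvd (pow_pos Q.factorial_pos 2) hdvd) k.succ_pos
  rw [crtModulus, Nat.sub_add_cancel hpos, Nat.div_mul_cancel hdvd]

theorem factorial_dvd_crtModulus_add_one (hk : k < Q) : Q ! ∣ crtModulus Q k + 1 := by
  obtain ⟨c, hc⟩ := Nat.dvd_factorial k.succ_pos hk
  refine ⟨c, Nat.eq_of_mul_eq_mul_right k.succ_pos ?_⟩
  rw [crtModulus_add_one_mul hk, sq, mul_assoc, mul_comm c, ← hc]

theorem two_le_crtModulus (hQ : 3 ≤ Q) (hk : k < Q) : 2 ≤ crtModulus Q k := by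
  have hle := Nat.le_of_dvd (Nat.succ_pos _) (factorial_dvd_crtModulus_add_one hk)
  have := Q.self_le_factorial
  omega

theorem lt_of_prime_dvd_crtModulus {p : ℕ} (hp : p.Prime) (hk : k < Q)
    (h : p ∣ crtModulus Q k) : Q < p := by
  by_contra! hpQ
  have hsucc : p ∣ crtModulus Q k + 1 :=
    (Nat.dvd_factorial hp.pos hpQ).trans (factorial_dvd_crtModulus_add_one hk)
  exact hp.not_dvd_one ((Nat.dvd_add_right h).1 hsucc)

theorem factorial_sq_sub_one_modEq (hk : k < Q) : Q ! ^ 2 - 1 ≡ k [MOD crtModulus Q k] := by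
  have heq : Q ! ^ 2 - 1 = crtModulus Q k * (k + 1) + k := by
    rw [← crtModulus_add_one_mul hk, add_mul, one_mul, ← add_assoc, Nat.add_sub_cancel]
  rw [heq]
  simp [Nat.ModEq]

theorem coprime_crtModulus {j : ℕ} (hk : k < Q) (hj : j < Q) (hkj : k ≠ j) :
    (crtModulus Q k).Coprime (crtModulus Q j) := by
  refine Nat.coprime_of_dvd fun p hp hpk hpj => hkj ?_
  have hQp := lt_of_prime_dvd_crtModulus hp hk hpk
  have hmod : k ≡ j [MOD p] :=
    ((factorial_sq_sub_one_modEq hk).of_dvd hpk).symm.trans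
      ((factorial_sq_sub_one_modEq hj).of_dvd hpj)
  exact hmod.eq_of_lt_of_lt (hk.trans hQp) (hj.trans hQp)

theorem coprime_crtModulus_factorial {u : ℕ} (hk : k < Q) (hu : u ≤ Q) :
    (crtModulus Q k).Coprime u ! :=
  Nat.coprime_of_dvd fun _ hp hpk hpu =>
    ((lt_of_prime_dvd_crtModulus hp hk hpk).trans_le (hp.dvd_factorial.1 hpu)).not_ge hu

variable {y : ℕ}

theorem prod_crtModulus (hy : y ≤ Q) :
    ∏ k ∈ Finset.range y, crtModulus Q k = (Q ! ^ 2 - 1).choose y := by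
  refine Nat.eq_of_mul_eq_mul_left y.factorial_pos ?_
  rw [← Nat.descFactorial_eq_factorial_mul_choose, Nat.descFactorial_eq_prod_range,
    ← Finset.prod_range_add_one_eq_factorial, ← Finset.prod_mul_distrib]
  refine Finset.prod_congr rfl fun k hk => ?_
  rw [← crtModulus_add_one_mul ((Finset.mem_range.1 hk).trans_le hy), Nat.add_mul (crtModulus Q k),
    one_mul, Nat.sub_sub, add_comm 1 k, Nat.add_sub_cancel, mul_comm]

theorem modEq_choose_iff_forall_modEq_crtModulus (hy : y ≤ Q) {a b : ℕ} :
    a ≡ b [MOD (Q ! ^ 2 - 1).choose y] ↔ ∀ k < y, a ≡ b [MOD crtModulus Q k] := by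
  simp only [← prod_crtModulus hy, Nat.modEq_iff_dvd, Nat.cast_prod]
  refine ⟨fun h k hk => (Finset.dvd_prod_of_mem _ (Finset.mem_range.2 hk)).trans h, fun h =>
    Finset.prod_dvd_of_coprime (fun i hi j hj hij => ?_) fun k hk => h k (Finset.mem_range.1 hk)⟩
  exact (coprime_crtModulus ((Finset.mem_range.1 hi).trans_le hy)
    ((Finset.mem_range.1 hj).trans_le hy) hij).isCoprime

theorem exists_forall_modEq_crtModulus (hQ : 3 ≤ Q) (hy : y ≤ Q) (t : ℕ → ℕ) :
    ∃ a, ∀ k < y, a ≡ t k [MOD crtModulus Q k] := by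
  have hlt {k : ℕ} (hk : k ∈ Finset.range y) : k < Q := (Finset.mem_range.1 hk).trans_le hy
  obtain ⟨a, ha⟩ := Nat.chineseRemainderOfFinset t (crtModulus Q) (Finset.range y)
    (fun k hk => (zero_lt_two.trans_le (two_le_crtModulus hQ (hlt hk))).ne')
    fun i hi j hj hij => coprime_crtModulus (hlt hi) (hlt hj) hij
  exact ⟨a, fun k hk => ha k (Finset.mem_range.2 hk)⟩

end crtModulus

theorem dvd_choose_of_modEq {m a z u : ℕ} (hm : m.Coprime (u + 1)!)
    (h : a ≡ z [MOD m]) (hz : z ≤ u) : m ∣ a.choose (u + 1) := by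
  rcases le_or_gt z a with hza | hza
  · refine hm.dvd_of_dvd_mul_left ?_
    rw [← Nat.descFactorial_eq_factorial_mul_choose, Nat.descFactorial_eq_prod_range]
    exact ((Nat.modEq_iff_dvd' hza).1 h.symm).trans
      (Finset.dvd_prod_of_mem (fun i => a - i) (Finset.mem_range.2 (Nat.lt_succ_of_le hz)))
  · rw [Nat.choose_eq_zero_of_lt (by omega)]
    exact dvd_zero m

theorem mod_le_of_prime_dvd_choose {p a u : ℕ} (hp : p.Prime) (h : p ∣ a.choose (u + 1)) :
    a % p ≤ u := by
  rcases le_or_gt a u with hau | hau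
  · exact (Nat.mod_le a p).trans hau
  · have hdvd : p ∣ ∏ i ∈ Finset.range (u + 1), (a - i) := by
      rw [← Nat.descFactorial_eq_prod_range, Nat.descFactorial_eq_factorial_mul_choose]
      exact h.mul_left _
    obtain ⟨i, hi, hpi⟩ := (hp.prime.dvd_finsetProd_iff _).1 hdvd
    have hiu : i ≤ u := Nat.le_of_lt_succ (Finset.mem_range.1 hi)
    have hmod : i % p = a % p := (Nat.modEq_iff_dvd' (by omega)).2 hpi
    exact hmod ▸ (Nat.mod_le i p).trans hiu

/-! ### Bounded universal quantifiers -/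

section BoundedForall

variable {α β : Type*} {p q : MvPolynomial (Option α ⊕ β) ℕ} {y u : ℕ} {v : α → ℕ} {a : β → ℕ}

/-- A number `Q` exceeding `y`, `u`, and both sides of the equation `p(k, v, t) = q(k, v, t)` as
long as `k ≤ y` and all entries of `t` are at most `u`. -/
noncomputable def crtBound (p q : MvPolynomial (Option α ⊕ β) ℕ) (y : ℕ) (v : α → ℕ) (u : ℕ) : ℕ :=
  eval (y ::ₒ v ⊗ fun _ => u) (p + q) + u + y + 3

/-- The tuple `a` encodes, through its residues modulo the numbers `crtModulus Q k` with `k < y`,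
solutions `t` of the equations `p(k, v, t) = q(k, v, t)` whose entries are at most `u`. The variable
`k` is replaced by `Q!² - 1`, which is congruent to `k` modulo `crtModulus Q k`. -/
def IsCRTCode (p q : MvPolynomial (Option α ⊕ β) ℕ) (y : ℕ) (v : α → ℕ) (u : ℕ)
    (a : β → ℕ) : Prop :=
  let N := (crtBound p q y v u)! ^ 2 - 1
  eval (N ::ₒ v ⊗ a) p ≡ eval (N ::ₒ v ⊗ a) q [MOD N.choose y] ∧
    ∀ b, N.choose y ∣ (a b).choose (u + 1)

theorem le_crtBound : y ≤ crtBound p q y v u := by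
  unfold crtBound; omega

theorem lt_crtBound : u < crtBound p q y v u := by
  unfold crtBound; omega

theorem three_le_crtBound : 3 ≤ crtBound p q y v u := by
  unfold crtBound; omega

theorem eval_add_eval_lt_crtBound {k : ℕ} {t : β → ℕ} (hk : k ≤ y) (ht : ∀ b, t b ≤ u) :
    eval (k ::ₒ v ⊗ t) p + eval (k ::ₒ v ⊗ t) q < crtBound p q y v u := by
  have hle : k ::ₒ v ⊗ t ≤ y ::ₒ v ⊗ fun _ => u := by
    rintro ((_ | i) | b)
    exacts [hk, le_rfl, ht b]
  have hmono := eval_monotone (p + q) hle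
  rw [← map_add]
  unfold crtBound
  dsimp only at hmono
  omega

theorem elim_modEq {m k l : ℕ} {s t : β → ℕ} (hkl : k ≡ l [MOD m]) (hst : ∀ b, s b ≡ t b [MOD m]) :
    ∀ i, (k ::ₒ v ⊗ s) i ≡ (l ::ₒ v ⊗ t) i [MOD m] := by
  rintro ((_ | i) | b)
  exacts [hkl, .rfl, hst b]

theorem exists_isCRTCode {t : ℕ → β → ℕ} (htu : ∀ k < y, ∀ b, t k b ≤ u)
    (ht : ∀ k < y, eval (k ::ₒ v ⊗ t k) p = eval (k ::ₒ v ⊗ t k) q) :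
    ∃ a, IsCRTCode p q y v u a := by
  set Q := crtBound p q y v u
  have hyQ : y ≤ Q := le_crtBound
  choose a ha using fun b =>
    exists_forall_modEq_crtModulus three_le_crtBound hyQ fun k => t k b
  refine ⟨a, (modEq_choose_iff_forall_modEq_crtModulus hyQ).2 fun k hk => ?_, fun b =>
    Nat.modEq_zero_iff_dvd.1 ((modEq_choose_iff_forall_modEq_crtModulus hyQ).2 fun k hk => ?_)⟩
  · have hmod := elim_modEq (v := v) (factorial_sq_sub_one_modEq (hk.trans_le hyQ))
      fun b => ha b k hk
    calc eval ((Q ! ^ 2 - 1) ::ₒ v ⊗ a) p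
      _ ≡ eval (k ::ₒ v ⊗ t k) p [MOD crtModulus Q k] := eval_modEq hmod p
      _ = eval (k ::ₒ v ⊗ t k) q := ht k hk
      _ ≡ eval ((Q ! ^ 2 - 1) ::ₒ v ⊗ a) q [MOD crtModulus Q k] := (eval_modEq hmod q).symm
  · exact Nat.modEq_zero_iff_dvd.2 (dvd_choose_of_modEq
      (coprime_crtModulus_factorial (hk.trans_le hyQ) lt_crtBound) (ha b k hk) (htu k hk b))

theorem IsCRTCode.exists_eval_eq (h : IsCRTCode p q y v u a) {k : ℕ} (hk : k < y) :
    ∃ t : β → ℕ, eval (k ::ₒ v ⊗ t) p = eval (k ::ₒ v ⊗ t) q := by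
  obtain ⟨hpq, ha⟩ := h
  set Q := crtBound p q y v u
  have hkQ : k < Q := hk.trans_le le_crtBound
  -- A prime factor `P` of `crtModulus Q k` exceeds `Q`, hence both sides of the equation at the
  -- residues of `a`, so a congruence modulo `P` is enough.
  have hm : crtModulus Q k ≠ 1 :=
    (one_lt_two.trans_le (two_le_crtModulus three_le_crtBound hkQ)).ne'
  obtain ⟨P, hP, hPm⟩ := Nat.exists_prime_and_dvd hm
  have hPchoose : P ∣ (Q ! ^ 2 - 1).choose y := by
    rw [← prod_crtModulus le_crtBound]
    exact hPm.trans (Finset.dvd_prod_of_mem _ (Finset.mem_range.2 hk))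
  have hle (b : β) : a b % P ≤ u := mod_le_of_prime_dvd_choose hP (hPchoose.trans (ha b))
  have hmod := elim_modEq (v := v) ((factorial_sq_sub_one_modEq hkQ).of_dvd hPm)
    fun b => (Nat.mod_modEq (a b) P).symm
  refine ⟨fun b => a b % P, Nat.ModEq.eq_of_lt_of_lt (m := P) ?_ ?_ ?_⟩
  · exact (eval_modEq hmod p).symm.trans ((hpq.of_dvd hPchoose).trans (eval_modEq hmod q))
  all_goals
    have hlt := (eval_add_eval_lt_crtBound (p := p) (q := q) (v := v) hk.le hle).trans
      (lt_of_prime_dvd_crtModulus hP hkQ hPm)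
    omega

theorem forall_lt_exists_eval_eq_iff [Finite β] :
    (∀ k < y, ∃ t : β → ℕ, eval (k ::ₒ v ⊗ t) p = eval (k ::ₒ v ⊗ t) q) ↔
      ∃ u a, IsCRTCode p q y v u a := by
  refine ⟨fun h => ?_, fun ⟨_, _, h⟩ _ hk => h.exists_eval_eq hk⟩
  have := Fintype.ofFinite β
  choose! t ht using h
  let u := (Finset.range y).sup fun k => Finset.univ.sup (t k)
  refine ⟨u, exists_isCRTCode (fun k hk b => ?_) ht⟩
  exact (Finset.le_sup (f := t k) (Finset.mem_univ b)).trans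
    (Finset.le_sup (f := fun k => Finset.univ.sup (t k)) (Finset.mem_range.2 hk))

end BoundedForall

theorem forall_dioph {α : Type u} {ι : Type*} [Finite ι] {S : ι → Set (α → ℕ)}
    (h : ∀ i, Dioph (S i)) : Dioph {v | ∀ i, v ∈ S i} := by
  have := Fintype.ofFinite ι
  refine (DiophList.forall (Finset.univ.toList.map S) ?_).ext fun v => ?_ <;>
    simp [List.forall_iff_forall_mem, Set.mem_ofPred_eq, h]

theorem isCRTCode_dioph {α β γ : Type} [Finite β] (p q : MvPolynomial (Option α ⊕ β) ℕ)
    {y u : (γ → ℕ) → ℕ} {v : (γ → ℕ) → α → ℕ} {a : (γ → ℕ) → β → ℕ} (dy : DiophFn y)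
    (dv : ∀ i, DiophFn fun w => v w i) (du : DiophFn u) (da : ∀ b, DiophFn fun w => a w b) :
    Dioph {w | IsCRTCode p q (y w) (v w) (u w) (a w)} := by
  have dQ : DiophFn fun w => crtBound p q (y w) (v w) (u w) := by
    refine eval_dioph ?_ (p + q) D+ du D+ dy D+ D.3
    rintro ((_ | i) | _)
    exacts [dy, dv i, du]
  have dN : DiophFn fun w => (crtBound p q (y w) (v w) (u w))! ^ 2 - 1 :=
    pow_dioph (factorial_dioph dQ) (D.2) D- D.1
  have deval (r : MvPolynomial (Option α ⊕ β) ℕ) : DiophFn fun w =>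
      eval (((crtBound p q (y w) (v w) (u w))! ^ 2 - 1) ::ₒ v w ⊗ a w) r := by
    refine eval_dioph ?_ r
    rintro ((_ | i) | b)
    exacts [dN, dv i, da b]
  have dM := choose_dioph dN dy
  exact (D≡ (deval p) (deval q) dM) D∧
    forall_dioph fun b => dM D∣ choose_dioph (da b) (du D+ D.1)

theorem forall_lt_dioph {α : Type} {S : Set (Option α → ℕ)} (d : Dioph S) {f : (α → ℕ) → ℕ}
    (df : DiophFn f) : Dioph {v | ∀ k < f v, k ::ₒ v ∈ S} := by
  obtain ⟨β, _, p, q, hpq⟩ := exists_finite_mvPolynomial_of_dioph d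
  have dcode : Dioph {w : Option α ⊕ β → ℕ | IsCRTCode p q (f (w ∘ Sum.inl ∘ some))
      (w ∘ Sum.inl ∘ some) (w (Sum.inl none)) (w ∘ Sum.inr)} :=
    isCRTCode_dioph p q (reindex_diophFn _ df) (fun _ => proj_dioph _) (proj_dioph _)
      fun _ => proj_dioph _
  refine (ex1_dioph (ex_dioph dcode)).ext fun v => ?_
  have hv (u : ℕ) (a : β → ℕ) : (u ::ₒ v ⊗ a) ∘ Sum.inl ∘ some = v := rfl
  simp only [Set.mem_ofPred_eq, hpq, forall_lt_exists_eval_eq_iff, hv, Sum.elim_inl,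
    Sum.elim_comp_inr, Option.elim'_none]

open scoped Vector3 in
theorem vec_forall_lt_dioph (n : ℕ) {S : Set (Vector3 ℕ (n + 1))} (d : Dioph S)
    {f : Vector3 ℕ n → ℕ} (df : DiophFn f) : Dioph {v | ∀ k < f v, (k :: v) ∈ S} := by
  refine (forall_lt_dioph (reindex_dioph _ (none :: some) d) df).ext fun v =>
    forall₂_congr fun k _ => ?_
  have hcons : (k ::ₒ v) ∘ (none :: some) = k :: v := by
    funext i
    cases i <;> rfl
  exact iff_of_eq (congrArg (· ∈ S) hcons)

/-! ### Pairing and Gödel's beta function -/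

section Pairing

open scoped Vector3

variable {α : Type} {f g : (α → ℕ) → ℕ}

theorem pair_dioph (df : DiophFn f) (dg : DiophFn g) : DiophFn fun v => Nat.pair (f v) (g v) := by
  have d : Dioph {v : Vector3 ℕ 3 | v &1 < v &2 ∧ v &0 = v &2 * v &2 + v &1 ∨
      v &2 ≤ v &1 ∧ v &0 = v &1 * v &1 + v &1 + v &2} :=
    (D&1 D< D&2 D∧ D&0 D= D&2 D* D&2 D+ D&1) D∨
      D&2 D≤ D&1 D∧ D&0 D= D&1 D* D&1 D+ D&1 D+ D&2
  refine diophFn_comp2 df dg <| (diophFn_vec _).2 <| d.ext <|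
    (vectorAll_iff_forall _).1 fun z x y => ?_
  change x < y ∧ z = y * y + x ∨ y ≤ x ∧ z = x * x + x + y ↔ Nat.pair x y = z
  unfold Nat.pair
  grind

theorem unpair_fst_dioph (df : DiophFn f) : DiophFn fun v => (f v).unpair.1 := by
  have d : Dioph {v : Vector3 ℕ 2 | ∃ y, Nat.pair (v &0) y = v &1} :=
    (D∃) 2 <| pair_dioph (D&1) (D&0) D= D&2
  have dunpair : DiophFn fun v : Vector3 ℕ 1 => (v &0).unpair.1 :=
    (diophFn_vec _).2 <| d.ext <| (vectorAll_iff_forall _).1 fun x n =>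
      show (∃ y, Nat.pair x y = n) ↔ n.unpair.1 = x from
        ⟨by rintro ⟨y, rfl⟩; simp, by rintro rfl; exact ⟨_, n.pair_unpair⟩⟩
  exact diophFn_comp dunpair [f] df

theorem unpair_snd_dioph (df : DiophFn f) : DiophFn fun v => (f v).unpair.2 := by
  have d : Dioph {v : Vector3 ℕ 2 | ∃ x, Nat.pair x (v &0) = v &1} :=
    (D∃) 2 <| pair_dioph (D&0) (D&1) D= D&2
  have dunpair : DiophFn fun v : Vector3 ℕ 1 => (v &0).unpair.2 :=
    (diophFn_vec _).2 <| d.ext <| (vectorAll_iff_forall _).1 fun y n =>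
      show (∃ x, Nat.pair x y = n) ↔ n.unpair.2 = y from
        ⟨by rintro ⟨x, rfl⟩; simp, by rintro rfl; exact ⟨_, n.pair_unpair⟩⟩
  exact diophFn_comp dunpair [f] df

theorem beta_dioph (df : DiophFn f) (dg : DiophFn g) : DiophFn fun v => Nat.beta (f v) (g v) :=
  unpair_fst_dioph df D% ((dg D+ D.1) D* unpair_snd_dioph df D+ D.1)

end Pairing

theorem exists_beta_eq (s : ℕ → ℕ) (n : ℕ) : ∃ c, ∀ k ≤ n, Nat.beta c k = s k := by
  refine ⟨Nat.unbeta ((List.range (n + 1)).map s), fun k hk => ?_⟩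
  simpa using Nat.beta_unbeta_coe ((List.range (n + 1)).map s) ⟨k, by simp; omega⟩

/-! ### Partial recursive functions -/

theorem mem_rec_bind_iff_exists_seq {σ : Type*} {F : Part σ} {G : ℕ → σ →. σ} {n : ℕ} {b : σ} :
    b ∈ (Nat.rec F (fun k x => x >>= G k) n : Part σ) ↔
      ∃ s : ℕ → σ, s 0 ∈ F ∧ s n = b ∧ ∀ k < n, s (k + 1) ∈ G k (s k) := by
  induction n generalizing b with
  | zero =>
    refine ⟨fun h => ⟨fun _ => b, h, rfl, by simp⟩, ?_⟩
    rintro ⟨s, h, rfl, -⟩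
    exact h
  | succ n ih =>
    refine Part.mem_bind_iff.trans ⟨?_, ?_⟩
    · rintro ⟨i, hi, hb⟩
      obtain ⟨s, h0, rfl, hs⟩ := ih.1 hi
      refine ⟨fun k => if k ≤ n then s k else b, by simpa, by simp, fun k hk => ?_⟩
      rcases Nat.lt_succ_iff_lt_or_eq.1 hk with hk | rfl
      · simpa [hk.le, Nat.succ_le_of_lt hk] using hs k hk
      · simpa using hb
    · rintro ⟨s, h0, rfl, hs⟩
      exact ⟨s n, ih.2 ⟨s, h0, rfl, fun k hk => hs k (hk.trans n.lt_add_one)⟩, hs n n.lt_add_one⟩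

theorem mem_rec_bind_iff_exists_beta {F : Part ℕ} {G : ℕ → ℕ →. ℕ} {n b : ℕ} :
    b ∈ (Nat.rec F (fun k x => x >>= G k) n : Part ℕ) ↔
      ∃ c, Nat.beta c 0 ∈ F ∧ Nat.beta c n = b ∧
        ∀ k < n, Nat.beta c (k + 1) ∈ G k (Nat.beta c k) := by
  refine mem_rec_bind_iff_exists_seq.trans ⟨?_, fun ⟨c, h⟩ => ⟨Nat.beta c, h⟩⟩
  rintro ⟨s, h0, rfl, hs⟩
  obtain ⟨c, hc⟩ := exists_beta_eq s n
  refine ⟨c, by rwa [hc 0 n.zero_le], hc n le_rfl, fun k hk => ?_⟩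
  rw [hc k hk.le, hc (k + 1) hk]
  exact hs k hk

theorem mem_rfind_eq_zero_iff {f : ℕ →. ℕ} {n : ℕ} :
    n ∈ Nat.rfind (fun k => (fun m => decide (m = 0)) <$> f k) ↔
      0 ∈ f n ∧ ∀ k < n, ∃ x, x ∈ f k ∧ x ≠ 0 :=
  Nat.mem_rfind.trans (by simp)

section DiophGraph

open scoped Vector3

/-- A partial function `ℕ →. ℕ` whose graph is a Diophantine set of pairs. This is the unary case of
`DiophPFun`, with the argument as the first coordinate and the value as the second. -/
def DiophGraph (f : ℕ →. ℕ) : Prop :=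
  Dioph {v : Vector3 ℕ 2 | v &1 ∈ f (v &0)}

variable {f g : ℕ →. ℕ}

theorem DiophGraph.dioph_mem (hf : DiophGraph f) {α : Type} {a b : (α → ℕ) → ℕ} (da : DiophFn a)
    (db : DiophFn b) : Dioph {v | b v ∈ f (a v)} :=
  dioph_comp2 (S := fun x y => y ∈ f x) da db hf

theorem diophGraph_coe {h : ℕ → ℕ} (dh : DiophFn fun v : Vector3 ℕ 1 => h (v &0)) :
    DiophGraph (h : ℕ →. ℕ) := by
  have d : Dioph {v : Vector3 ℕ 2 | v &1 = h (v &0)} :=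
    D&1 D= diophFn_comp dh [fun v => v &0] (D&0)
  exact d.ext fun _ => Part.mem_some_iff.symm

theorem DiophGraph.pair (hf : DiophGraph f) (hg : DiophGraph g) :
    DiophGraph fun n => Nat.pair <$> f n <*> g n := by
  have d : Dioph {v : Vector3 ℕ 2 | ∃ x y, x ∈ f (v &0) ∧ y ∈ g (v &0) ∧ Nat.pair x y = v &1} :=
    (D∃) 2 <| (D∃) 3 <|
      hf.dioph_mem (D&2) (D&1) D∧ hg.dioph_mem (D&2) (D&0) D∧ pair_dioph (D&1) (D&0) D= D&3
  exact d.ext fun v => by simp [Seq.seq]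

theorem DiophGraph.comp (hf : DiophGraph f) (hg : DiophGraph g) :
    DiophGraph fun n => g n >>= f := by
  have d : Dioph {v : Vector3 ℕ 2 | ∃ x, x ∈ g (v &0) ∧ v &1 ∈ f x} :=
    (D∃) 2 <| hg.dioph_mem (D&1) (D&0) D∧ hf.dioph_mem (D&0) (D&2)
  exact d.ext fun _ => Part.mem_bind_iff.symm

theorem DiophGraph.prec (hf : DiophGraph f) (hg : DiophGraph g) :
    DiophGraph (Nat.unpaired fun a n =>
      n.rec (f a) fun y IH => do let i ← IH; g (Nat.pair a (Nat.pair y i))) := by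
  have d : Dioph {v : Vector3 ℕ 2 | ∃ c, Nat.beta c 0 ∈ f (v &0).unpair.1 ∧
      Nat.beta c (v &0).unpair.2 = v &1 ∧ ∀ k < (v &0).unpair.2,
        Nat.beta c (k + 1) ∈ g (Nat.pair (v &0).unpair.1 (Nat.pair k (Nat.beta c k)))} :=
    (D∃) 2 <|
      hf.dioph_mem (unpair_fst_dioph (D&1)) (beta_dioph (D&0) (D.0)) D∧
      beta_dioph (D&0) (unpair_snd_dioph (D&1)) D= D&2 D∧
      vec_forall_lt_dioph 3
        (hg.dioph_mem
          (pair_dioph (unpair_fst_dioph (D&2)) (pair_dioph (D&0) (beta_dioph (D&1) (D&0))))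
          (beta_dioph (D&1) (D&0 D+ D.1)))
        (unpair_snd_dioph (D&1))
  exact d.ext fun v => (mem_rec_bind_iff_exists_beta
    (G := fun k x => g (Nat.pair (v &0).unpair.1 (Nat.pair k x)))).symm

theorem DiophGraph.rfind (hf : DiophGraph f) :
    DiophGraph fun a => Nat.rfind fun n => (fun m => m = 0) <$> f (Nat.pair a n) := by
  have d : Dioph {v : Vector3 ℕ 2 | 0 ∈ f (Nat.pair (v &0) (v &1)) ∧
      ∀ k < v &1, ∃ x, x ∈ f (Nat.pair (v &0) k) ∧ x ≠ 0} :=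
    hf.dioph_mem (pair_dioph (D&0) (D&1)) (D.0) D∧
      vec_forall_lt_dioph 2
        ((D∃) 3 <| hf.dioph_mem (pair_dioph (D&2) (D&1)) (D&0) D∧ D&0 D≠ D.0) (D&1)
  exact d.ext fun v =>
    (mem_rfind_eq_zero_iff (f := fun k => f (Nat.pair (v &0) k))).symm

theorem diophGraph_of_partrec (hf : Nat.Partrec f) : DiophGraph f := by
  induction hf with
  | zero => exact diophGraph_coe (D.0)
  | succ => exact diophGraph_coe (D&0 D+ D.1)
  | left => exact diophGraph_coe (unpair_fst_dioph (D&0))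
  | right => exact diophGraph_coe (unpair_snd_dioph (D&0))
  | pair _ _ hf hg => exact hf.pair hg
  | comp _ _ hf hg => exact hf.comp hg
  | prec _ _ hf hg => exact hf.prec hg
  | rfind _ hf => exact hf.rfind

end DiophGraph

/-! ### Encodings of tuples -/

theorem encode_list_dioph {α : Type} {σ : Type*} [Encodable σ] {l : List ((α → ℕ) → σ)}
    (hl : ∀ f ∈ l, DiophFn fun v => Encodable.encode (f v)) :
    DiophFn fun v => Encodable.encode (l.map fun f => f v) := by
  induction l with
  | nil => exact D.0
  | cons f l ih =>
    rw [List.forall_mem_cons] at hl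
    exact pair_dioph hl.1 (ih hl.2) D+ D.1

/-- Mathlib encodes a tuple `v : Fin n → ℕ` through the list of the pairs `⟨i, v i⟩`. -/
theorem encode_dioph (n : ℕ) : DiophFn fun v : Fin n → ℕ => Encodable.encode v := by
  have heq (v : Fin n → ℕ) : Encodable.encode v =
      Encodable.encode (List.ofFn fun i => (⟨i, v i⟩ : Σ _ : Fin n, ℕ)) := by
    rw [← List.Vector.toList_ofFn]
    rfl
  have dlist := encode_list_dioph
    (l := List.ofFn fun i (v : Fin n → ℕ) => (⟨i, v i⟩ : Σ _ : Fin n, ℕ))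
    (List.forall_mem_ofFn_iff.2 fun i => pair_dioph (const_dioph _) (proj_dioph i))
  simpa only [List.map_ofFn, Function.comp_def, heq] using dlist

theorem dprm_theorem_general {α : Type} {e : (α → ℕ) → ℕ} (he : DiophFn e) (S : Set (α → ℕ))
    (hre : ∃ f : ℕ →. ℕ, Nat.Partrec f ∧ ∀ v : α → ℕ, v ∈ S ↔ (f (e v)).Dom) :
    Dioph S := by
  obtain ⟨f, hf, hS⟩ := hre
  have dgraph : Dioph {w : Option α → ℕ | w none ∈ f (e (w ∘ some))} :=
    (diophGraph_of_partrec hf).dioph_mem (reindex_diophFn some he) (proj_dioph none)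
  exact (ex1_dioph dgraph).ext fun v => Part.dom_iff_mem.symm.trans (hS v).symm

/-- **The DPRM theorem**: every recursively enumerable set of `n`-tuples of natural
numbers (i.e. the domain of a partial recursive function under the standard encoding
of tuples) is Diophantine. -/
theorem dprm_theorem (n : ℕ) (S : Set (Fin n → ℕ))
    (hre : ∃ f : ℕ →. ℕ, Nat.Partrec f ∧
      ∀ v : Fin n → ℕ, v ∈ S ↔ (f (Encodable.encode v)).Dom) :
    Dioph S :=
  dprm_theorem_general (encode_dioph n) S hre
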